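/- arXiv:1401.4713 — 3 statements merged into one kernel-verified Lean document; each statement's English description precedes it below -/
import Mathlib

section
/- Let n ≥ 2, m ≥ 1 be integers and let j be an integer with n+1 ≤ j ≤ 2n−1. Let z_0 ∈ ℂ be a periodic point of minimal period m of the map f_0(w) = w^n with z_0 ≠ 0. For a ∈ ℂ define f_a(z) = z^n/(1 − a·z^{j−n}). Suppose z(·) is a holomorphic function on a neighborhood of 0 in ℂ such that z(0) = z_0 and f_a^{∘m}(z(a)) = z(a) for all a in that neighborhood, and let λ(a) denote the derivative of the m-th iterate f_a^{∘m} at the point z(a). Then λ'(0) = (j·n^{m−1} − n^m)·Σ_{i=0}^{m−1} z_0^{n^i(j−n)}. -/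
/-!
In logarithmic coordinates the derivative of a map `f` at `x` is its elasticity `x f'(x) / f(x)`.
Along a cycle avoiding `0` the factors `x` and `f(x)` have the same product, so the multiplier of
the cycle is the product of the elasticities at its points. For `f_a(w) = w^n / (1 - a w^k)` the
elasticity at `w` is `n + a k w^k / (1 - a w^k)`. At `a = 0` it is the constant `n`, and since the
second term carries a factor `a`, its derivative in `a` there is `k w^k`, whatever the motion of `w`
with `a`. The product rule then gives `k n^(m-1) ∑ w_i^k`, where `w_i = z_0^(n^i)` is the orbit at
`a = 0`.
-/

open Filter Function Topology

theorem prod_map_iterate_of_isPeriodicPt {M : Type*} [CommMonoid M] {f : M → M} {m : ℕ} {x : M}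
    (hx : IsPeriodicPt f m x) :
    ∏ i ∈ Finset.range m, f (f^[i] x) = ∏ i ∈ Finset.range m, f^[i] x := by
  cases m with
  | zero => rfl
  | succ m =>
    simp only [← iterate_succ_apply' f]
    rw [Finset.prod_range_succ, Finset.prod_range_succ' (fun i => f^[i] x), hx.eq,
      iterate_zero_apply]

variable {𝕜 : Type*} [NontriviallyNormedField 𝕜]

theorem hasDerivAt_iterate {f f' : 𝕜 → 𝕜} {m : ℕ} {x : 𝕜}
    (hf : ∀ i < m, HasDerivAt f (f' (f^[i] x)) (f^[i] x)) :
    HasDerivAt f^[m] (∏ i ∈ Finset.range m, f' (f^[i] x)) x := by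
  induction m with
  | zero => simpa using hasDerivAt_id x
  | succ m ih =>
    rw [iterate_succ', Finset.prod_range_succ, mul_comm]
    exact (hf m m.lt_succ_self).comp x (ih fun i hi => hf i (hi.trans m.lt_succ_self))

theorem hasDerivAt_prod_of_eq {ι : Type*} {s : Finset ι} {g : ι → 𝕜 → 𝕜} {g' : ι → 𝕜} {c a : 𝕜}
    (hg : ∀ i ∈ s, HasDerivAt (g i) (g' i) a) (hc : ∀ i ∈ s, g i a = c) :
    HasDerivAt (fun b => ∏ i ∈ s, g i b) (c ^ (s.card - 1) * ∑ i ∈ s, g' i) a := by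
  classical
  refine (HasDerivAt.fun_finsetProd hg).congr_deriv ?_
  rw [Finset.mul_sum]
  refine Finset.sum_congr rfl fun i hi => ?_
  rw [Finset.prod_congr rfl fun l hl => hc l (Finset.mem_of_mem_erase hl), Finset.prod_const,
    Finset.card_erase_of_mem hi, smul_eq_mul]

/-- The elasticity `x f'(x) / f(x)` of `f` at `x`, that is, the derivative of `log f` with respect
to `log x`. It is `0` by convention where `f` vanishes or is not differentiable. -/
noncomputable def elasticity (f : 𝕜 → 𝕜) (x : 𝕜) : 𝕜 :=
  x * logDeriv f x

theorem deriv_iterate_eq_prod_elasticity {f : 𝕜 → 𝕜} {m : ℕ} {x : 𝕜} (hx : IsPeriodicPt f m x)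
    (hf : ∀ i < m, DifferentiableAt 𝕜 f (f^[i] x)) (hne : ∀ i < m, f^[i] x ≠ 0) :
    deriv f^[m] x = ∏ i ∈ Finset.range m, elasticity f (f^[i] x) := by
  have hprod : ∏ i ∈ Finset.range m, f^[i] x ≠ 0 :=
    Finset.prod_ne_zero_iff.2 fun i hi => hne i (Finset.mem_range.1 hi)
  rw [(hasDerivAt_iterate fun i hi => (hf i hi).hasDerivAt).deriv]
  simp only [elasticity, logDeriv_apply, Finset.prod_mul_distrib, Finset.prod_div_distrib,
    prod_map_iterate_of_isPeriodicPt hx]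
  rw [mul_div_cancel₀ _ hprod]

/-- The family `f_a(w) = w^n / (1 - a w^k)` of perturbations of the power map `w ↦ w^n`, with
arbitrary integer exponents. The paper's `k` is `j - n`. -/
def ratFamily (n k : ℤ) (a w : 𝕜) : 𝕜 :=
  w ^ n / (1 - a * w ^ k)

namespace ratFamily

variable {n k : ℤ} {a w : 𝕜}

theorem natCast_sub {n j : ℕ} (h : n ≤ j) (a : 𝕜) :
    ratFamily (n : ℤ) ((j : ℤ) - n) a = fun w => w ^ n / (1 - a * w ^ (j - n)) := by
  funext w
  rw [ratFamily, ← Nat.cast_sub h, zpow_natCast, zpow_natCast]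

theorem iterate_zero_param (n k : ℤ) (i : ℕ) (w : 𝕜) :
    (ratFamily n k 0)^[i] w = w ^ n ^ i := by
  induction i with
  | zero => simp
  | succ i ih =>
    rw [iterate_succ_apply', ih, pow_succ, zpow_mul]
    simp [ratFamily]

theorem iterate_zero_param_ne_zero (n k : ℤ) (i : ℕ) (hw : w ≠ 0) :
    (ratFamily n k 0)^[i] w ≠ 0 :=
  iterate_zero_param n k i w ▸ zpow_ne_zero _ hw

theorem differentiableAt (hw : w ≠ 0) (hd : 1 - a * w ^ k ≠ 0) :
    DifferentiableAt 𝕜 (ratFamily n k a) w :=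
  (differentiableAt_zpow.2 (.inl hw)).fun_div
    (((differentiableAt_zpow.2 (.inl hw)).const_mul a).const_sub 1) hd

theorem elasticity_eq (hw : w ≠ 0) (hd : 1 - a * w ^ k ≠ 0) :
    elasticity (ratFamily n k a) w = n + a * (k * w ^ k / (1 - a * w ^ k)) := by
  have hpow (l : ℤ) : DifferentiableAt 𝕜 (fun v : 𝕜 => v ^ l) w :=
    differentiableAt_zpow.2 (.inl hw)
  have hden : deriv (fun v : 𝕜 => 1 - a * v ^ k) w = -(a * (k * w ^ (k - 1))) := by
    rw [deriv_const_sub, deriv_const_mul _ (hpow k), deriv_zpow]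
  have hlog : logDeriv (ratFamily n k a) w =
      logDeriv (fun v => v ^ n) w - logDeriv (fun v => 1 - a * v ^ k) w :=
    logDeriv_div w (zpow_ne_zero n hw) hd (hpow n) (((hpow k).const_mul a).const_sub 1)
  rw [elasticity, hlog, logDeriv_zpow, logDeriv_apply, hden, zpow_sub_one₀ hw]
  field_simp
  ring

section MovingPoint

variable {x : 𝕜 → 𝕜}

theorem differentiableAt_denom (k : ℤ) (hx : DifferentiableAt 𝕜 x 0) (hx0 : x 0 ≠ 0) :
    DifferentiableAt 𝕜 (fun a => 1 - a * x a ^ k) 0 :=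
  (differentiableAt_id.fun_mul (hx.zpow (.inl hx0))).const_sub 1

theorem eventually_denom_ne_zero (k : ℤ) (hx : DifferentiableAt 𝕜 x 0) (hx0 : x 0 ≠ 0) :
    ∀ᶠ a in 𝓝 0, 1 - a * x a ^ k ≠ 0 :=
  (differentiableAt_denom k hx hx0).continuousAt.eventually_ne (by simp)

theorem differentiableAt_iterate (n k : ℤ) (hx : DifferentiableAt 𝕜 x 0) (hx0 : x 0 ≠ 0) (i : ℕ) :
    DifferentiableAt 𝕜 (fun a => (ratFamily n k a)^[i] (x a)) 0 := by
  induction i with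
  | zero => exact hx
  | succ i ih =>
    have hne := iterate_zero_param_ne_zero n k i hx0
    simp only [iterate_succ_apply']
    exact (ih.zpow (.inl hne)).fun_div (differentiableAt_denom k ih hne) (by simp)

theorem hasDerivAt_elasticity (n k : ℤ) (hx : DifferentiableAt 𝕜 x 0) (hx0 : x 0 ≠ 0) :
    HasDerivAt (fun a => elasticity (ratFamily n k a) (x a)) (k * x 0 ^ k) 0 := by
  have hq : DifferentiableAt 𝕜 (fun a => k * x a ^ k / (1 - a * x a ^ k)) 0 :=
    ((hx.zpow (.inl hx0)).const_mul (k : 𝕜)).fun_div (differentiableAt_denom k hx hx0) (by simp)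
  have hformula : HasDerivAt (fun a => n + a * (k * x a ^ k / (1 - a * x a ^ k)))
      (k * x 0 ^ k) 0 :=
    (((hasDerivAt_id 0).fun_mul hq.hasDerivAt).const_add (n : 𝕜)).congr_deriv (by simp)
  refine hformula.congr_of_eventuallyEq ?_
  filter_upwards [hx.continuousAt.eventually_ne hx0, eventually_denom_ne_zero k hx hx0]
    with a ha hd using elasticity_eq ha hd

theorem eventually_deriv_iterate_eq (hx : DifferentiableAt 𝕜 x 0) (hx0 : x 0 ≠ 0) {m : ℕ}
    (hper : ∀ᶠ a in 𝓝 0, IsPeriodicPt (ratFamily n k a) m (x a)) :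
    ∀ᶠ a in 𝓝 0, deriv (ratFamily n k a)^[m] (x a) =
      ∏ i ∈ Finset.range m, elasticity (ratFamily n k a) ((ratFamily n k a)^[i] (x a)) := by
  have hregular : ∀ᶠ a in 𝓝 0, ∀ i ∈ Finset.range m, (ratFamily n k a)^[i] (x a) ≠ 0 ∧
      1 - a * (ratFamily n k a)^[i] (x a) ^ k ≠ 0 := by
    refine (eventually_all_finset _).2 fun i _ => ?_
    have hdiff := differentiableAt_iterate n k hx hx0 i
    have hne := iterate_zero_param_ne_zero n k i hx0
    exact (hdiff.continuousAt.eventually_ne hne).and (eventually_denom_ne_zero k hdiff hne)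
  filter_upwards [hper, hregular] with a ha hreg
  simp only [Finset.mem_range] at hreg
  exact deriv_iterate_eq_prod_elasticity ha
    (fun i hi => differentiableAt (hreg i hi).1 (hreg i hi).2) fun i hi => (hreg i hi).1

end MovingPoint

end ratFamily

theorem multiplier_deriv_rat_family_general (n j : ℤ) (m : ℕ) {z : 𝕜 → 𝕜}
    (hz : DifferentiableAt 𝕜 z 0) (hz0 : z 0 ≠ 0)
    (hper : ∀ᶠ a in 𝓝 0, IsPeriodicPt (ratFamily n (j - n) a) m (z a)) :
    HasDerivAt (fun a => deriv (ratFamily n (j - n) a)^[m] (z a))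
      ((j * n ^ (m - 1) - n ^ m) * ∑ i ∈ Finset.range m, z 0 ^ (n ^ i * (j - n))) 0 := by
  have hne (i : ℕ) := ratFamily.iterate_zero_param_ne_zero n (j - n) i hz0
  have hprod := hasDerivAt_prod_of_eq (s := Finset.range m) (c := (n : 𝕜))
    (fun i _ => ratFamily.hasDerivAt_elasticity n (j - n)
      (ratFamily.differentiableAt_iterate n (j - n) hz hz0 i) (hne i))
    (fun i _ => by rw [ratFamily.elasticity_eq (hne i) (by simp), zero_mul, add_zero])
  refine (hprod.congr_of_eventuallyEq
    (ratFamily.eventually_deriv_iterate_eq hz hz0 hper)).congr_deriv ?_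
  simp only [ratFamily.iterate_zero_param, ← zpow_mul, ← Finset.mul_sum, Finset.card_range]
  cases m with
  | zero => simp
  | succ m =>
    push_cast [Nat.add_sub_cancel]
    ring

/-- Derivative of the multiplier of a periodic orbit of `f_0(z) = z^n` in the
one-parameter family `f_a(z) = z^n / (1 - a z^{j-n})`, for `n+1 ≤ j ≤ 2n-1`:
`λ'(0) = (j n^{m-1} - n^m) ∑_{i=0}^{m-1} z_0^{n^i (j-n)}`. -/
theorem multiplier_deriv_rat_family (n m j : ℕ) (hn : 2 ≤ n) (hm : 1 ≤ m)
    (hj1 : n + 1 ≤ j) (hj2 : j ≤ 2 * n - 1)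
    (z0 : ℂ) (hz0 : z0 ≠ 0)
    (hper : (fun w : ℂ => w ^ n)^[m] z0 = z0)
    (hmin : ∀ r, 1 ≤ r → r < m → (fun w : ℂ => w ^ n)^[r] z0 ≠ z0)
    (U : Set ℂ) (hU : U ∈ nhds (0 : ℂ))
    (z : ℂ → ℂ) (hzhol : DifferentiableOn ℂ z U) (hz00 : z 0 = z0)
    (hfix : ∀ a ∈ U, (fun w : ℂ => w ^ n / (1 - a * w ^ (j - n)))^[m] (z a) = z a) :
    deriv (fun a => deriv ((fun w : ℂ => w ^ n / (1 - a * w ^ (j - n)))^[m]) (z a)) 0 =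
      ((j : ℂ) * (n : ℂ) ^ (m - 1) - (n : ℂ) ^ m) *
        ∑ i ∈ Finset.range m, z0 ^ ((n : ℤ) ^ i * ((j : ℤ) - (n : ℤ))) := by
  have hz : DifferentiableAt ℂ z 0 := hzhol.differentiableAt hU
  subst hz00
  simp only [← ratFamily.natCast_sub (show n ≤ j by omega)] at hfix ⊢
  exact_mod_cast (multiplier_deriv_rat_family_general n j m hz hz0
    (eventually_of_mem hU hfix)).deriv
end

section
/- Let n ≥ 2 and m ≥ 1 be integers, and let j_1, j_2 be integers with 0 ≤ j_1 < j_2 ≤ n−2. Then the polynomials P_{n,j_1,m} and P_{n,j_2,m} have no monomial terms of the same degree; that is, their supports (the sets of exponents with nonzero coefficient) are disjoint. -/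
/-- The polynomial `P_{n,j,m} ∈ ℂ[z]` from Proposition 4.3:
`P_{n,j,m}(z) = (j n^{m-1} - n^m)(z^{(j+1)n^{m-1}-1} + ∑_{i=0}^{m-2} z^{n^i(j-n)+n^{m-1}})`
for `0 ≤ j ≤ n-2` (where `n^i(j-n) + n^{m-1} = n^{m-1} - n^i (n-j)` is a nonnegative
integer), `P_{n,j,m}(z) = (j n^{m-1} - n^m) ∑_{i=0}^{m-1} z^{n^i(j-n)+n^{m-1}}` for
`n+1 ≤ j ≤ 2n-2`, and
`P_{n,j,m}(z) = (j n^{m-1} - n^m)(z + ∑_{i=0}^{m-2} z^{n^i(n-1)+n^{m-1}})` for `j = 2n-1`. -/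
noncomputable def P (n j m : ℕ) : Polynomial ℂ :=
  Polynomial.C ((j : ℂ) * (n : ℂ) ^ (m - 1) - (n : ℂ) ^ m) *
    (if j ≤ n - 2 then
      Polynomial.X ^ ((j + 1) * n ^ (m - 1) - 1) +
        ∑ i ∈ Finset.range (m - 1), Polynomial.X ^ (n ^ (m - 1) - n ^ i * (n - j))
    else if j ≤ 2 * n - 2 then
      ∑ i ∈ Finset.range m, Polynomial.X ^ (n ^ i * (j - n) + n ^ (m - 1))
    else
      Polynomial.X +
        ∑ i ∈ Finset.range (m - 1), Polynomial.X ^ (n ^ i * (n - 1) + n ^ (m - 1)))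

/-!
For `j ≤ n - 2`, every exponent of `P n j m` is either the top one, `(j + 1) * n ^ (m - 1) - 1`,
which is at least `n ^ (m - 1) - 1` and strictly increasing in `j`, or it falls short of
`n ^ (m - 1)` by some `n ^ i * (n - j) ≥ 2`, so that it lies below all the top ones. Since
`1 < n - j ≤ n`, this shortfall lies in the interval `(n ^ i, n ^ (i + 1)]`; these intervals are
disjoint for distinct `i`, so the shortfall determines `i`, hence also `j`.
-/

section PowMul

variable {R : Type*} [Semiring R] [LinearOrder R] [IsStrictOrderedRing R] {n a b : R} {i k : ℕ}

theorem pow_mul_le_pow_of_lt (hn : 1 ≤ n) (ha : a ≤ n) (hik : i < k) : n ^ i * a ≤ n ^ k :=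
  calc n ^ i * a ≤ n ^ i * n :=
        mul_le_mul_of_nonneg_left ha (pow_nonneg (zero_le_one.trans hn) i)
    _ = n ^ (i + 1) := (pow_succ n i).symm
    _ ≤ n ^ k := pow_le_pow_right₀ hn hik

theorem exponent_le_of_pow_mul_le_pow_mul (hn : 1 < n) (ha : 1 < a) (hb : b ≤ n)
    (h : n ^ i * a ≤ n ^ k * b) : i ≤ k := by
  have hlt : n ^ i < n ^ (k + 1) :=
    calc n ^ i < n ^ i * a := lt_mul_of_one_lt_right (pow_pos (zero_lt_one.trans hn) i) ha
      _ ≤ n ^ k * b := h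
      _ ≤ n ^ (k + 1) := pow_mul_le_pow_of_lt hn.le hb k.lt_succ_self
  exact Nat.lt_succ_iff.mp ((pow_lt_pow_iff_right₀ hn).mp hlt)

theorem eq_of_pow_mul_eq_pow_mul (ha : 1 < a) (han : a ≤ n) (hb : 1 < b) (hbn : b ≤ n)
    (h : n ^ i * a = n ^ k * b) : a = b := by
  have hn : 1 < n := ha.trans_le han
  have hik : i = k := le_antisymm (exponent_le_of_pow_mul_le_pow_mul hn ha hbn h.le)
    (exponent_le_of_pow_mul_le_pow_mul hn hb han h.ge)
  subst hik
  exact (strictMono_mul_left_of_pos (pow_pos (zero_lt_one.trans hn) i)).injective h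

end PowMul

theorem support_sum_X_pow_subset {R ι : Type*} [Semiring R] (s : Finset ι) (f : ι → ℕ) :
    (∑ i ∈ s, (Polynomial.X : Polynomial R) ^ f i).support ⊆ s.image f := by
  intro e he
  rw [Polynomial.mem_support_iff, Polynomial.finsetSum_coeff] at he
  obtain ⟨i, hi, hne⟩ := Finset.exists_ne_zero_of_sum_ne_zero he
  rw [Polynomial.coeff_X_pow] at hne
  exact Finset.mem_image.mpr ⟨i, hi, (ite_ne_right_iff.mp hne).1.symm⟩

/-- The exponent of the leading monomial of `P n j m`, for `j ≤ n - 2`. -/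
def topExponent (n j m : ℕ) : ℕ := (j + 1) * n ^ (m - 1) - 1

/-- The exponent `n ^ i * (j - n) + n ^ (m - 1)` of the `i`-th monomial in the sum defining
`P n j m`, for `j ≤ n - 2`. The subtractions in `ℕ` are exact when `j ≤ n` and `i < m - 1`. -/
def lowExponent (n j m i : ℕ) : ℕ := n ^ (m - 1) - n ^ i * (n - j)

section Exponents

variable {n m j j' i i' : ℕ}

theorem eq_topExponent_or_eq_lowExponent {e : ℕ} (hj : j ≤ n - 2) (he : e ∈ (P n j m).support) :
    e = topExponent n j m ∨ ∃ i < m - 1, e = lowExponent n j m i := by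
  rw [P, if_pos hj, ← Polynomial.smul_eq_C_mul] at he
  rcases Finset.mem_union.mp (Polynomial.support_add (Polynomial.support_smul _ _ he))
    with htop | hlow
  · rw [Polynomial.support_X_pow] at htop
    exact .inl (Finset.mem_singleton.mp htop)
  · obtain ⟨i, hi, rfl⟩ := Finset.mem_image.mp (support_sum_X_pow_subset _ _ hlow)
    exact .inr ⟨i, Finset.mem_range.mp hi, rfl⟩

theorem topExponent_strictMono (hn : 0 < n) (m : ℕ) : StrictMono fun j => topExponent n j m := by
  intro j j' hjj'
  have hpos : 0 < n ^ (m - 1) := Nat.pow_pos hn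
  have hlt : (j + 1) * n ^ (m - 1) < (j' + 1) * n ^ (m - 1) :=
    Nat.mul_lt_mul_of_pos_right (Nat.succ_lt_succ hjj') hpos
  exact Nat.sub_lt_sub_right (Nat.mul_pos j.succ_pos hpos) hlt

theorem lowExponent_lt_topExponent (hj : j + 2 ≤ n) (hi : i < m - 1) (j' : ℕ) :
    lowExponent n j m i < topExponent n j' m := by
  have hshort : 2 ≤ n ^ i * (n - j) :=
    le_mul_of_one_le_of_le (Nat.one_le_pow _ _ (by omega)) (by omega)
  have hle : n ^ i * (n - j) ≤ n ^ (m - 1) := pow_mul_le_pow_of_lt (by omega) (n.sub_le j) hi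
  have htop : n ^ (m - 1) ≤ (j' + 1) * n ^ (m - 1) := Nat.le_mul_of_pos_left _ j'.succ_pos
  unfold lowExponent topExponent
  omega

theorem eq_of_lowExponent_eq (hj : j + 2 ≤ n) (hj' : j' + 2 ≤ n) (hi : i < m - 1)
    (hi' : i' < m - 1) (h : lowExponent n j m i = lowExponent n j' m i') : j = j' := by
  have hshort : n ^ i * (n - j) = n ^ i' * (n - j') :=
    (tsub_right_inj (pow_mul_le_pow_of_lt (by omega) (n.sub_le j) hi)
      (pow_mul_le_pow_of_lt (by omega) (n.sub_le j') hi')).mp h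
  have hsub : n - j = n - j' :=
    eq_of_pow_mul_eq_pow_mul (by omega) (n.sub_le j) (by omega) (n.sub_le j') hshort
  omega

end Exponents

/-- Proposition 4.3, property (a): for `0 ≤ j₁ < j₂ ≤ n-2`, the polynomials
`P_{n,j₁,m}` and `P_{n,j₂,m}` have no monomial terms of the same degree, i.e. their
supports are disjoint. -/
theorem P_supports_disjoint_low (n m j1 j2 : ℕ) (hn : 2 ≤ n) (hm : 1 ≤ m)
    (h12 : j1 < j2) (hj2 : j2 ≤ n - 2) :
    Disjoint (P n j1 m).support (P n j2 m).support := by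
  have hj1 : j1 ≤ n - 2 := by omega
  rw [Finset.disjoint_left]
  intro e he1 he2
  rcases eq_topExponent_or_eq_lowExponent hj1 he1 with h1 | ⟨i1, hi1, h1⟩ <;>
    rcases eq_topExponent_or_eq_lowExponent hj2 he2 with h2 | ⟨i2, hi2, h2⟩
  · exact (topExponent_strictMono (by omega) m h12).ne (h1.symm.trans h2)
  · exact (lowExponent_lt_topExponent (by omega) hi2 j1).ne (h2.symm.trans h1)
  · exact (lowExponent_lt_topExponent (by omega) hi1 j2).ne (h1.symm.trans h2)
  · exact h12.ne (eq_of_lowExponent_eq (by omega) (by omega) hi1 hi2 (h1.symm.trans h2))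
end

section
/- Let n ≥ 2 be an integer and J_n = {0,…,n−2} ∪ {n+1,…,2n−1}. Let (m_k)_{k∈J_n} be positive integers with m_k ≥ 2 for all k with n+1 ≤ k ≤ 2n−3 and with m_{2n−2} ≥ 3. Fix j ∈ J_n with 1 ≤ j ≤ 2n−2. Suppose there exist nonzero complex numbers z_k (for k ∈ J_n with k < j), each a periodic point of minimal period m_k of the map f_0(w) = w^n, such that the square matrix with rows and columns indexed by {k ∈ J_n : k < j} and with (k,i)-entry z_k^{−n^{m_k−1}}·P_{n,i,m_k}(z_k) is invertible. Then there exist nonzero complex numbers z_k (for k ∈ J_n with k ≤ j), each a periodic point of minimal period m_k of f_0, such that the square matrix with rows and columns indexed by {k ∈ J_n : k ≤ j} and with (k,i)-entry z_k^{−n^{m_k−1}}·P_{n,i,m_k}(z_k) is invertible. -/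
/-- The set of periodic points `z ∈ ℂ` of minimal period `m` of the map `f₀(w) = wⁿ`:
`f₀^∘m(z) = z` and `f₀^∘r(z) ≠ z` for all `1 ≤ r < m`. -/
def perSet (n m : ℕ) : Set ℂ :=
  {z : ℂ | (fun w : ℂ => w ^ n)^[m] z = z ∧
    ∀ r, 1 ≤ r → r < m → (fun w : ℂ => w ^ n)^[r] z ≠ z}

/-- The index set `J_n = {0,…,n-2} ∪ {n+1,…,2n-1}`. -/
def Jset (n : ℕ) : Finset ℕ :=
  (Finset.range (2 * n)).filter (fun k => k ≠ n - 1 ∧ k ≠ n)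

/-!
Expand the enlarged determinant along its new row `j`. As a function of the new point `x` it is,
up to a power of `x`, a polynomial `Q = ∑ i ≤ j, c i • P n i m` whose coefficient `c j` is the given
nonzero determinant. The monomial `topExp n j m` occurs in `P n j m` but in no `P n i m` with
`i < j`, so `Q ≠ 0`. Finally `Q` cannot vanish at all nonzero points of minimal period `m`: their
number is at least `(n - 1) n ^ (m - 1)`, strictly more when `m ≥ 3`, and exceeds the degree of `Q`.
-/

open Finset Function Matrix Polynomial

section Determinant

variable {ι R : Type*} [CommRing R]

lemma det_updateRow_eq_vecMul_adjugate [Fintype ι] [DecidableEq ι] (A : Matrix ι ι R) (i : ι)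
    (v : ι → R) : (A.updateRow i v).det = (v ᵥ* A.adjugate) i := by
  rw [← cramer_transpose_apply, cramer_eq_adjugate_mulVec, ← adjugate_transpose, mulVec_transpose]

lemma adjugate_apply_self_eq_det_submatrix [Fintype ι] [DecidableEq ι] (A : Matrix ι ι R)
    (i : ι) :
    A.adjugate i i = (A.submatrix (Subtype.val : {k // k ≠ i} → ι) Subtype.val).det := by
  rw [adjugate_apply, twoBlockTriangular_det _ (· ≠ i)]
  · have hcorner : ((A.updateRow i (Pi.single i 1)).toSquareBlockProp fun k => ¬k ≠ i) = 1 := by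
      ext ⟨a, ha⟩ ⟨b, hb⟩
      obtain rfl := not_not.1 ha
      obtain rfl := not_not.1 hb
      simp [toSquareBlockProp]
    rw [hcorner, det_one, mul_one]
    congr 1
    ext a b
    simp [toSquareBlockProp, updateRow_ne a.2]
  · rintro a ha b hb
    obtain rfl := not_not.1 ha
    rw [updateRow_self, Pi.single_eq_of_ne hb]

variable [PartialOrder ι] [DecidableEq ι] [DecidableLE ι] [DecidableLT ι]

lemma adjugate_filter_le_apply_self {s : Finset ι} {j : ι} (hj : j ∈ s.filter (· ≤ j))
    (F : ι → ι → R) :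
    (Matrix.of fun k i : (s.filter (· ≤ j) : Finset ι) => F k i).adjugate ⟨j, hj⟩ ⟨j, hj⟩ =
      (Matrix.of fun k i : (s.filter (· < j) : Finset ι) => F k i).det := by
  let e : (s.filter (· < j) : Finset ι) ≃
      {k : (s.filter (· ≤ j) : Finset ι) // k ≠ ⟨j, hj⟩} :=
    { toFun k := ⟨⟨k, by have := mem_filter.1 k.2; simp [this.1, this.2.le]⟩,
        fun h => (mem_filter.1 k.2).2.ne (congrArg Subtype.val h)⟩
      invFun k := ⟨k, by
        have := mem_filter.1 k.1.2
        exact mem_filter.2 ⟨this.1, this.2.lt_of_ne fun h => k.2 (Subtype.ext h)⟩⟩ }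
  rw [adjugate_apply_self_eq_det_submatrix, ← det_submatrix_equiv_self e]
  rfl

end Determinant

section Update

variable {ι α : Type*}

lemma of_update_eq_updateRow {R : Type*} [DecidableEq ι] {s : Finset ι} {j : ι} (hj : j ∈ s)
    (F : ι → ι → α → R) (z : ι → α) (x : α) :
    (Matrix.of fun k i : s => F k i (update z j x k)) =
      (Matrix.of fun k i : s => F k i (z k)).updateRow ⟨j, hj⟩ fun i => F j i x := by
  ext k i
  rcases eq_or_ne k ⟨j, hj⟩ with rfl | hk
  · simp
  · simp [updateRow_ne hk, update_of_ne (Subtype.coe_injective.ne hk)]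

lemma forall_filter_le_update [PartialOrder ι] [DecidableEq ι] [DecidableLE ι] [DecidableLT ι]
    {s : Finset ι} {j : ι} {p : ι → α → Prop} {z : ι → α} {x : α}
    (hz : ∀ k ∈ s.filter (· < j), p k (z k)) (hx : p j x) :
    ∀ k ∈ s.filter (· ≤ j), p k (update z j x k) := by
  intro k hk
  obtain ⟨hks, hkj⟩ := mem_filter.1 hk
  rcases eq_or_ne k j with rfl | hne
  · rwa [update_self]
  · rw [update_of_ne hne]
    exact hz k (mem_filter.2 ⟨hks, hkj.lt_of_ne hne⟩)

end Update

section PeriodicPoints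

variable {n m : ℕ}

lemma mem_perSet_minimalPeriod (n : ℕ) (z : ℂ) : z ∈ perSet n (minimalPeriod (· ^ n) z) :=
  ⟨iterate_minimalPeriod, fun _ hr hlt =>
    not_isPeriodicPt_of_pos_of_lt_minimalPeriod (Nat.one_le_iff_ne_zero.1 hr) hlt⟩

lemma isPeriodicPt_pow_iff {K : Type*} [Field K] {z : K} (hz : z ≠ 0) (hn : n ≠ 0) (r : ℕ) :
    IsPeriodicPt (· ^ n) r z ↔ z ^ (n ^ r - 1) = 1 := by
  have hpow : z ^ n ^ r = z ^ (n ^ r - 1) * z := (pow_sub_one_mul (pow_ne_zero r hn) z).symm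
  rw [IsPeriodicPt, IsFixedPt, pow_iterate, ← mul_eq_right₀ hz, ← hpow]

lemma card_nthRootsFinset_complex (k : ℕ) : #(nthRootsFinset k (1 : ℂ)) = k := by
  rcases eq_or_ne k 0 with rfl | hk
  · simp
  · exact (Complex.isPrimitiveRoot_exp k hk).card_nthRootsFinset

open Classical in
/-- The nonzero points of minimal period `m` of `w ↦ w ^ n` as a finite set (for `2 ≤ n` and
`0 < m`): a nonzero point is fixed by the `m`-th iterate iff it is an `(n ^ m - 1)`-th root of
unity. -/
noncomputable def perFinset (n m : ℕ) : Finset ℂ :=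
  {z ∈ nthRootsFinset (n ^ m - 1) (1 : ℂ) | z ∈ perSet n m}

lemma mem_perFinset {z : ℂ} :
    z ∈ perFinset n m ↔ z ∈ nthRootsFinset (n ^ m - 1) (1 : ℂ) ∧ z ∈ perSet n m := by
  simp [perFinset]

lemma pow_sub_one_pos (hn : 2 ≤ n) (hm : m ≠ 0) : 0 < n ^ m - 1 :=
  Nat.sub_pos_of_lt (Nat.one_lt_pow hm hn)

lemma ne_zero_and_mem_perSet_of_mem_perFinset {z : ℂ} (hz : z ∈ perFinset n m) :
    z ≠ 0 ∧ z ∈ perSet n m := by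
  obtain ⟨hroot, hper⟩ := mem_perFinset.1 hz
  exact ⟨ne_zero_of_mem_nthRootsFinset one_ne_zero hroot, hper⟩

lemma nthRootsFinset_subset_perFinset_union (hn : 2 ≤ n) (hm : m ≠ 0) :
    nthRootsFinset (n ^ m - 1) (1 : ℂ) ⊆
      perFinset n m ∪ m.properDivisors.biUnion fun d => nthRootsFinset (n ^ d - 1) 1 := by
  intro z hz
  have hz0 : z ≠ 0 := ne_zero_of_mem_nthRootsFinset one_ne_zero hz
  have hper : IsPeriodicPt (· ^ n) m z := by
    rwa [isPeriodicPt_pow_iff hz0 (by omega), ← mem_nthRootsFinset (pow_sub_one_pos hn hm)]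
  rw [mem_union, mem_biUnion]
  rcases hper.minimalPeriod_le (Nat.pos_of_ne_zero hm) |>.eq_or_lt with heq | hlt
  · exact .inl (mem_perFinset.2 ⟨hz, heq ▸ mem_perSet_minimalPeriod n z⟩)
  · have hpos := hper.minimalPeriod_pos (Nat.pos_of_ne_zero hm)
    refine .inr ⟨_, Nat.mem_properDivisors.2 ⟨hper.minimalPeriod_dvd, hlt⟩, ?_⟩
    rw [mem_nthRootsFinset (pow_sub_one_pos hn hpos.ne'), ← isPeriodicPt_pow_iff hz0 (by omega)]
    exact isPeriodicPt_minimalPeriod _ z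

lemma pow_sub_one_le_card_perFinset_add (hn : 2 ≤ n) (hm : m ≠ 0) :
    n ^ m - 1 ≤ #(perFinset n m) + ∑ d ∈ m.properDivisors, (n ^ d - 1) :=
  calc n ^ m - 1 = #(nthRootsFinset (n ^ m - 1) (1 : ℂ)) := (card_nthRootsFinset_complex _).symm
    _ ≤ #(perFinset n m) + #(m.properDivisors.biUnion fun d => nthRootsFinset (n ^ d - 1) 1) :=
      (card_le_card (nthRootsFinset_subset_perFinset_union hn hm)).trans (card_union_le _ _)
    _ ≤ #(perFinset n m) + ∑ d ∈ m.properDivisors, (n ^ d - 1) := by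
      gcongr
      exact card_biUnion_le.trans_eq (sum_congr rfl fun _ _ => card_nthRootsFinset_complex _)

lemma sum_properDivisors_pow_sub_one_add_two_le (hn : 2 ≤ n) (hm : 3 ≤ m) :
    ∑ d ∈ m.properDivisors, (n ^ d - 1) + 2 ≤ n ^ (m - 1) := by
  have hlt_pred : ∀ d ∈ m.properDivisors, d < m - 1 := fun d hd => by
    obtain ⟨⟨c, rfl⟩, hlt⟩ := Nat.mem_properDivisors.1 hd
    have hc : 2 ≤ c := by by_contra!; interval_cases c <;> omega
    have := Nat.mul_le_mul_left d hc
    omega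
  have hone : 1 ∈ m.properDivisors := Nat.one_mem_properDivisors_iff_one_lt.2 (by omega)
  have hlt : ∑ d ∈ m.properDivisors, (n ^ d - 1) < ∑ d ∈ m.properDivisors, n ^ d :=
    sum_lt_sum (fun _ _ => Nat.sub_le _ _) ⟨1, hone, Nat.sub_lt (Nat.pow_pos (by omega)) one_pos⟩
  have := Nat.geomSum_lt hn hlt_pred
  omega

lemma sum_properDivisors_pow_sub_one_add_one_le (hn : 2 ≤ n) (hm : m ≠ 0) :
    ∑ d ∈ m.properDivisors, (n ^ d - 1) + 1 ≤ n ^ (m - 1) := by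
  obtain rfl | rfl | hm3 : m = 1 ∨ m = 2 ∨ 3 ≤ m := by omega
  · simp
  · rw [Nat.prime_two.properDivisors, sum_singleton, Nat.sub_add_cancel (Nat.pow_pos (by omega))]
  · exact (Nat.le_succ _).trans (sum_properDivisors_pow_sub_one_add_two_le hn hm3)

lemma sub_one_mul_pow_add_pow (hn : n ≠ 0) (hm : m ≠ 0) :
    (n - 1) * n ^ (m - 1) + n ^ (m - 1) = n ^ m := by
  rw [← Nat.succ_mul, Nat.succ_eq_add_one, Nat.sub_add_cancel (Nat.pos_of_ne_zero hn),
    mul_pow_sub_one hm]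

lemma sub_one_mul_pow_le_card_perFinset (hn : 2 ≤ n) (hm : m ≠ 0) :
    (n - 1) * n ^ (m - 1) ≤ #(perFinset n m) := by
  have := pow_sub_one_le_card_perFinset_add hn hm
  have := sum_properDivisors_pow_sub_one_add_one_le hn hm
  have := sub_one_mul_pow_add_pow (n := n) (by omega) hm
  omega

lemma sub_one_mul_pow_lt_card_perFinset (hn : 2 ≤ n) (hm : 3 ≤ m) :
    (n - 1) * n ^ (m - 1) < #(perFinset n m) := by
  have := pow_sub_one_le_card_perFinset_add hn (m := m) (by omega)
  have := sum_properDivisors_pow_sub_one_add_two_le hn hm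
  have := sub_one_mul_pow_add_pow (n := n) (m := m) (by omega) (by omega)
  omega

lemma exists_mem_perSet_eval_ne_zero {Q : ℂ[X]} (hQ : Q ≠ 0)
    (hdeg : Q.natDegree < #(perFinset n m)) :
    ∃ x, (x ≠ 0 ∧ x ∈ perSet n m) ∧ Q.eval x ≠ 0 := by
  contrapose! hQ
  exact eq_zero_of_natDegree_lt_card_of_eval_eq_zero' Q (perFinset n m)
    (fun x hx => hQ x (ne_zero_and_mem_perSet_of_mem_perFinset hx)) hdeg

end PeriodicPoints

section TopExponent

variable {n m i j e : ℕ}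

lemma mem_Jset : j ∈ Jset n ↔ j < 2 * n ∧ j ≠ n - 1 ∧ j ≠ n := by
  simp [Jset]

/-- The degree of `P n i m` for `i ∈ Jset n` with `i ≤ 2 * n - 2`. Its monomial separates `P n i m`
from all the polynomials of smaller index. -/
def topExp (n i m : ℕ) : ℕ :=
  if i ≤ n - 2 then (i + 1) * n ^ (m - 1) - 1 else (i - n + 1) * n ^ (m - 1)

lemma pow_sub_one_le_topExp (n i m : ℕ) : n ^ (m - 1) - 1 ≤ topExp n i m := by
  have hmul (a : ℕ) : n ^ (m - 1) ≤ (a + 1) * n ^ (m - 1) := Nat.le_mul_of_pos_left _ a.succ_pos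
  rw [topExp]
  split_ifs
  · exact Nat.sub_le_sub_right (hmul i) 1
  · exact (Nat.sub_le _ 1).trans (hmul (i - n))

lemma topExp_lt_topExp (hn : 2 ≤ n) (hij : i < j) (h : j ≤ n - 2 ∨ n ≤ i) :
    topExp n i m < topExp n j m := by
  have hq : 0 < n ^ (m - 1) := Nat.pow_pos (by omega)
  rcases h with h | h
  · rw [topExp, topExp, if_pos (by omega), if_pos h]
    have hmul : (i + 1) * n ^ (m - 1) < (j + 1) * n ^ (m - 1) :=
      Nat.mul_lt_mul_of_pos_right (Nat.succ_lt_succ hij) hq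
    have hpos : 0 < (i + 1) * n ^ (m - 1) := by positivity
    omega
  · rw [topExp, topExp, if_neg (by omega), if_neg (by omega)]
    exact Nat.mul_lt_mul_of_pos_right (by omega) hq

lemma topExp_ne_topExp (hn : 2 ≤ n) (hm : 2 ≤ m) (hi : i ≤ n - 2) (hj : n - 2 < j) :
    topExp n j m ≠ topExp n i m := by
  rw [topExp, topExp, if_neg (by omega), if_pos hi]
  intro heq
  have hq : 1 < n ^ (m - 1) := Nat.one_lt_pow (by omega) hn
  have hpos : 0 < (i + 1) * n ^ (m - 1) := by positivity
  have hsucc : (j - n + 1) * n ^ (m - 1) + 1 = (i + 1) * n ^ (m - 1) := by omega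
  have hdvd : n ^ (m - 1) ∣ 1 := (Nat.dvd_add_right (dvd_mul_left _ _)).1 (hsucc ▸ dvd_mul_left _ _)
  exact hq.ne' (Nat.dvd_one.1 hdvd)

lemma topExp_lt_card_perFinset (hm : m ≠ 0) (hj : j ∈ Jset n) (hj2 : j ≤ 2 * n - 2)
    (hm3 : j = 2 * n - 2 → 3 ≤ m) : topExp n j m < #(perFinset n m) := by
  have hj' := mem_Jset.1 hj
  have hn : 2 ≤ n := by omega
  have hcard := sub_one_mul_pow_le_card_perFinset hn hm
  have hq : 0 < n ^ (m - 1) := Nat.pow_pos (by omega)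
  rw [topExp]
  split_ifs with hlow
  · have h1 : (j + 1) * n ^ (m - 1) ≤ (n - 1) * n ^ (m - 1) := Nat.mul_le_mul_right _ (by omega)
    have h2 : 0 < (j + 1) * n ^ (m - 1) := by positivity
    omega
  · obtain rfl | hlt := hj2.eq_or_lt
    · rw [show 2 * n - 2 - n + 1 = n - 1 by omega]
      exact sub_one_mul_pow_lt_card_perFinset hn (hm3 rfl)
    · exact (Nat.mul_lt_mul_of_pos_right (by omega) hq).trans_le hcard

/-- The constant factor of `P n i m`, which is also its leading coefficient. -/
noncomputable def topCoeff (n i m : ℕ) : ℂ :=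
  i * n ^ (m - 1) - n ^ m

lemma topCoeff_ne_zero (hn : n ≠ 0) (hm : m ≠ 0) (hi : i ≠ n) : topCoeff n i m ≠ 0 := by
  rw [topCoeff, ← mul_pow_sub_one hm, ← sub_mul]
  have hn' : (n : ℂ) ≠ 0 := Nat.cast_ne_zero.2 hn
  exact mul_ne_zero (sub_ne_zero.2 (Nat.cast_injective.ne hi)) (pow_ne_zero _ hn')

lemma coeff_P_of_le_sub_two (hn : 2 ≤ n) (hi : i ≤ n - 2) (he : n ^ (m - 1) - 1 ≤ e) :
    (P n i m).coeff e = if e = topExp n i m then topCoeff n i m else 0 := by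
  have hsum : ∑ s ∈ range (m - 1), (X ^ (n ^ (m - 1) - n ^ s * (n - i)) : ℂ[X]).coeff e = 0 := by
    refine sum_eq_zero fun s hs => ?_
    have h1 : 1 * 2 ≤ n ^ s * (n - i) := Nat.mul_le_mul (Nat.one_le_pow _ _ (by omega)) (by omega)
    have h2 : 1 < n ^ (m - 1) := Nat.one_lt_pow (by have := mem_range.1 hs; omega) hn
    rw [coeff_X_pow, if_neg (by omega)]
  rw [P, if_pos hi, topExp, if_pos hi, coeff_C_mul, coeff_add, finsetSum_coeff, hsum, add_zero,
    coeff_X_pow, mul_ite, mul_one, mul_zero]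
  rfl

lemma coeff_P_of_lt (hm : m ≠ 0) (hi : n < i) (hi2 : i ≤ 2 * n - 2) (he : topExp n i m ≤ e) :
    (P n i m).coeff e = if e = topExp n i m then topCoeff n i m else 0 := by
  have htop : topExp n i m = n ^ (m - 1) * (i - n) + n ^ (m - 1) := by
    rw [topExp, if_neg (by omega)]; ring
  have hsum : ∀ s ∈ range m, s ≠ m - 1 →
      (X ^ (n ^ s * (i - n) + n ^ (m - 1)) : ℂ[X]).coeff e = 0 := by
    intro s hs hne
    have hpow : n ^ s < n ^ (m - 1) :=
      Nat.pow_lt_pow_right (by omega) (by have := mem_range.1 hs; omega)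
    have := Nat.mul_lt_mul_of_pos_right hpow (Nat.sub_pos_of_lt hi)
    rw [coeff_X_pow, if_neg (by omega)]
  rw [P, if_neg (by omega), if_pos hi2, coeff_C_mul, finsetSum_coeff,
    sum_eq_single_of_mem (m - 1) (mem_range.2 (by omega)) hsum, coeff_X_pow, ← htop, mul_ite,
    mul_one, mul_zero]
  rfl

lemma coeff_P_of_topExp_le (hm : m ≠ 0) (hi : i ∈ Jset n) (hi2 : i ≤ 2 * n - 2)
    (he : topExp n i m ≤ e) :
    (P n i m).coeff e = if e = topExp n i m then topCoeff n i m else 0 := by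
  have hi' := mem_Jset.1 hi
  by_cases hlow : i ≤ n - 2
  · exact coeff_P_of_le_sub_two (by omega) hlow ((pow_sub_one_le_topExp n i m).trans he)
  · exact coeff_P_of_lt hm (by omega) hi2 he

lemma natDegree_P_le_topExp (hm : m ≠ 0) (hi : i ∈ Jset n) (hi2 : i ≤ 2 * n - 2) :
    (P n i m).natDegree ≤ topExp n i m :=
  natDegree_le_iff_coeff_eq_zero.2 fun e he => by
    rw [coeff_P_of_topExp_le hm hi hi2 he.le, if_neg he.ne']

lemma coeff_P_topExp_ne_zero (hm : m ≠ 0) (hi : i ∈ Jset n) (hi2 : i ≤ 2 * n - 2) :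
    (P n i m).coeff (topExp n i m) ≠ 0 := by
  have hi' := mem_Jset.1 hi
  rw [coeff_P_of_topExp_le hm hi hi2 le_rfl, if_pos rfl]
  exact topCoeff_ne_zero (by omega) hm hi'.2.2

lemma coeff_P_topExp_eq_zero_of_lt (hm : m ≠ 0) (hi : i ∈ Jset n) (hij : i < j)
    (hj2 : j ≤ 2 * n - 2) (hjm : n - 2 < j → 2 ≤ m) : (P n i m).coeff (topExp n j m) = 0 := by
  have hi' := mem_Jset.1 hi
  have hn : 2 ≤ n := by omega
  by_cases hlow : i ≤ n - 2
  · have hne : topExp n j m ≠ topExp n i m := by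
      rcases le_or_gt j (n - 2) with h | h
      · exact (topExp_lt_topExp hn hij (.inl h)).ne'
      · exact topExp_ne_topExp hn (hjm h) hlow h
    rw [coeff_P_of_le_sub_two hn hlow (pow_sub_one_le_topExp n j m), if_neg hne]
  · have hlt : topExp n i m < topExp n j m := topExp_lt_topExp hn hij (.inr (by omega))
    rw [coeff_P_of_topExp_le hm hi (by omega) hlt.le, if_neg hlt.ne']

end TopExponent

section Extension

variable {n m j : ℕ}

/-- The partial derivative `∂λ_z/∂a_i(0)` of the multiplier of the `m`-periodic orbit of `z`, as a
function of `z`. -/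
noncomputable def multiplierDeriv (n m i : ℕ) (z : ℂ) : ℂ :=
  z ^ (-((n : ℤ) ^ (m - 1))) * (P n i m).eval z

lemma exists_mem_perSet_sum_multiplierDeriv_ne_zero (hm : m ≠ 0) (hj : j ∈ Jset n)
    (hj2 : j ≤ 2 * n - 2) (hm2 : n < j → 2 ≤ m) (hm3 : j = 2 * n - 2 → 3 ≤ m)
    (c : ((Jset n).filter (· ≤ j) : Finset ℕ) → ℂ)
    (hc : c ⟨j, mem_filter.2 ⟨hj, le_rfl⟩⟩ ≠ 0) :
    ∃ x, (x ≠ 0 ∧ x ∈ perSet n m) ∧ ∑ i, c i * multiplierDeriv n m i x ≠ 0 := by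
  have hjm : n - 2 < j → 2 ≤ m := fun h => hm2 (by have := mem_Jset.1 hj; omega)
  let Q : ℂ[X] := ∑ i, C (c i) * P n i m
  have hcoeff : Q.coeff (topExp n j m) =
      c ⟨j, mem_filter.2 ⟨hj, le_rfl⟩⟩ * (P n j m).coeff (topExp n j m) := by
    rw [finsetSum_coeff, Fintype.sum_eq_single ⟨j, mem_filter.2 ⟨hj, le_rfl⟩⟩, coeff_C_mul]
    rintro ⟨i, hi⟩ hne
    obtain ⟨hiJ, hij⟩ := mem_filter.1 hi
    have hlt : i < j := hij.lt_of_ne fun h => hne (Subtype.ext h)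
    rw [coeff_C_mul, coeff_P_topExp_eq_zero_of_lt hm hiJ hlt hj2 hjm, mul_zero]
  have hQ : Q ≠ 0 := by
    intro h
    rw [h, coeff_zero] at hcoeff
    exact mul_ne_zero hc (coeff_P_topExp_ne_zero hm hj hj2) hcoeff.symm
  have hcard : 0 < #(perFinset n m) :=
    (Nat.zero_le _).trans_lt (topExp_lt_card_perFinset hm hj hj2 hm3)
  have hdeg : Q.natDegree < #(perFinset n m) := by
    rw [← Nat.le_sub_one_iff_lt hcard]
    refine natDegree_sum_le_of_forall_le _ _ fun i _ => (natDegree_C_mul_le _ _).trans ?_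
    obtain ⟨hiJ, hij⟩ := mem_filter.1 i.2
    have hi2 : (i : ℕ) ≤ 2 * n - 2 := hij.trans hj2
    have hlt := topExp_lt_card_perFinset hm hiJ hi2 fun h => hm3 (by omega)
    exact (natDegree_P_le_topExp hm hiJ hi2).trans (Nat.le_sub_one_of_lt hlt)
  obtain ⟨x, hx, hQx⟩ := exists_mem_perSet_eval_ne_zero hQ hdeg
  have hsum : ∑ i, c i * multiplierDeriv n m i x = x ^ (-((n : ℤ) ^ (m - 1))) * Q.eval x := by
    simp only [multiplierDeriv, Q, eval_finsetSum, eval_mul, eval_C, mul_sum, mul_left_comm]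
  exact ⟨x, hx, hsum ▸ mul_ne_zero (zpow_ne_zero _ hx.1) hQx⟩

theorem step_one_general {n j : ℕ} {m : ℕ → ℕ} {z : ℕ → ℂ} (hj : j ∈ Jset n)
    (hj2 : j ≤ 2 * n - 2) (hm1 : 1 ≤ m j) (hm2 : n + 1 ≤ j → j ≤ 2 * n - 3 → 2 ≤ m j)
    (hm3 : j = 2 * n - 2 → 3 ≤ m j)
    (hdet : (Matrix.of fun k i : ((Jset n).filter (· < j) : Finset ℕ) =>
      multiplierDeriv n (m k) i (z k)).det ≠ 0) :
    ∃ x, (x ≠ 0 ∧ x ∈ perSet n (m j)) ∧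
      (Matrix.of fun k i : ((Jset n).filter (· ≤ j) : Finset ℕ) =>
        multiplierDeriv n (m k) i (update z j x k)).det ≠ 0 := by
  have hjmem : j ∈ (Jset n).filter (· ≤ j) := mem_filter.2 ⟨hj, le_rfl⟩
  let A := Matrix.of fun k i : ((Jset n).filter (· ≤ j) : Finset ℕ) =>
    multiplierDeriv n (m k) i (z k)
  have hadj : A.adjugate ⟨j, hjmem⟩ ⟨j, hjmem⟩ ≠ 0 :=
    (adjugate_filter_le_apply_self hjmem fun k i => multiplierDeriv n (m k) i (z k)).trans_ne hdet
  obtain ⟨x, hx, hsum⟩ := exists_mem_perSet_sum_multiplierDeriv_ne_zero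
    (Nat.one_le_iff_ne_zero.1 hm1) hj hj2 (by omega) hm3 (fun i => A.adjugate i ⟨j, hjmem⟩) hadj
  refine ⟨x, hx, ?_⟩
  rw [of_update_eq_updateRow hjmem fun k i => multiplierDeriv n (m k) i,
    det_updateRow_eq_vecMul_adjugate]
  simpa only [vecMul, dotProduct, mul_comm] using hsum

end Extension

/-- Lemma 6.4 (inductive step): under the conditions `m_k ≥ 2` for `n+1 ≤ k ≤ 2n-3` and
`m_{2n-2} ≥ 3`, if for some `j ∈ J_n` with `1 ≤ j ≤ 2n-2` there are nonzero periodic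
points `z_k` of minimal periods `m_k` (for `k ∈ J_n`, `k < j`) making the matrix with
`(k,i)`-entry `z_k^{-n^{m_k-1}} P_{n,i,m_k}(z_k)` invertible, then there are such points
for `k ∈ J_n`, `k ≤ j`, making the corresponding larger matrix invertible. -/
theorem step_one (n : ℕ) (hn : 2 ≤ n) (m : ℕ → ℕ)
    (hm1 : ∀ k ∈ Jset n, 1 ≤ m k)
    (hm2 : ∀ k, n + 1 ≤ k → k ≤ 2 * n - 3 → 2 ≤ m k)
    (hm3 : 3 ≤ m (2 * n - 2))
    (j : ℕ) (hjJ : j ∈ Jset n) (hj1 : 1 ≤ j) (hj2 : j ≤ 2 * n - 2)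
    (z : ℕ → ℂ)
    (hz : ∀ k ∈ (Jset n).filter (· < j), z k ≠ 0 ∧ z k ∈ perSet n (m k))
    (hdet : (Matrix.of fun (k i : ((Jset n).filter (· < j) : Finset ℕ)) =>
        z (k : ℕ) ^ (-((n : ℤ) ^ (m (k : ℕ) - 1))) *
          (P n (i : ℕ) (m (k : ℕ))).eval (z (k : ℕ))).det ≠ 0) :
    ∃ w : ℕ → ℂ,
      (∀ k ∈ (Jset n).filter (· ≤ j), w k ≠ 0 ∧ w k ∈ perSet n (m k)) ∧
      (Matrix.of fun (k i : ((Jset n).filter (· ≤ j) : Finset ℕ)) =>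
        w (k : ℕ) ^ (-((n : ℤ) ^ (m (k : ℕ) - 1))) *
          (P n (i : ℕ) (m (k : ℕ))).eval (w (k : ℕ))).det ≠ 0 := by
  obtain ⟨x, hx, hdet'⟩ := step_one_general hjJ hj2 (hm1 j hjJ) (hm2 j) (· ▸ hm3) hdet
  exact ⟨_, forall_filter_le_update (p := fun k x => x ≠ 0 ∧ x ∈ perSet n (m k)) hz hx, hdet'⟩
end
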